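/- Let p be a prime, t ≥ 1 and n = p^t, and let H be a subgroup of Sp(4, ℤ/nℤ) containing −1. Consider all ordered pairs (W₁, W₂) of subgroups of V = (ℤ/nℤ)⁴ such that W₁ and W₂ are each isomorphic to (ℤ/nℤ)², ⟨w₁, w₂⟩ = 0 for all w₁ ∈ W₁ and w₂ ∈ W₂, and W₁ + W₂ = V; for such a pair let φ_{W₁,W₂} be the element of Sp(4, ℤ/nℤ) acting as the identity on W₁ and as −1 on W₂. If ε > 0 and the number of such pairs with φ_{W₁,W₂} ∈ H is at least ε times the total number of such pairs, then the index of H in Sp(4, ℤ/nℤ) is strictly less than 2⁷·ε⁻²·[2²⁴⁶·ε⁻¹³⁰]_p. -/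

import Mathlib

/-!
The group `G = Sp(4, ℤ/p^t)` acts transitively on complementary pairs (a form of Witt's theorem,
`IsCompPair.exists_act`), and the involution of `g` applied to the standard pair is `g φ g⁻¹` with
`φ = diag(1, -1, 1, -1)`. Hence the hypothesis says that `T = {g | g φ g⁻¹ ∈ H}` has density at
least `ε` in `G` (`density_of_count`).

The involution `φ` inverts each of the four short root subgroups `u`, so that
`u(y) φ u(y)⁻¹ = φ u(-2y)`. Averaging over the cosets of these four subgroups
(`exists_good_frame`) gives one `g ∈ T` for which each coset `g u` meets `T` in a proportion at
least `ε / 4`; multiplying the involutions so obtained, `g⁻¹ H g` contains `u(2y)` for `y` in a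
subgroup of `ℤ/p^t` of density at least `ε / 4`, hence for all `y` in an ideal `(p^a)` with
`p^a ≤ 4/ε`. Commutators of short root elements are long root elements with parameter `2xy`, so
`g⁻¹ H g` contains all root elements of some level `p^c ≤ 128 ε⁻²` (`exists_rootsIn`).

If `c = 0` then `p` is odd and the root subgroups generate `G` (`RootsIn.eq_top`), so the index is
`1`. Otherwise the big cell decomposition shows that `g⁻¹ H g` contains the principal congruence
subgroup of level `p^(2c)` (`RootsIn.congruence`), and the index is at most `(p^(2c))^16`, the
number of `4 × 4` matrices modulo `p^(2c)`. As `p ≤ p^c`, this gives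
`p * index ≤ (128 ε⁻²)^33`, which is less than `2^253 ε⁻¹³²`; since `x < p [x]_p`, the claimed
bound follows.
-/

open Matrix

/-- `V n = (ℤ/nℤ)⁴`, with coordinates indexed so that `Sum.inl 0, Sum.inl 1, Sum.inr 0, Sum.inr 1`
correspond to the coordinates `x₁, x₂, x₃, x₄`. -/
abbrev V (n : ℕ) : Type := (Fin 2 ⊕ Fin 2) → ZMod n

/-- `Sp(4, ℤ/nℤ)`. -/
abbrev Sp4 (n : ℕ) := Matrix.symplecticGroup (Fin 2) (ZMod n)

/-- The standard symplectic form `⟨x,y⟩ = x₁y₃ + x₂y₄ − x₃y₁ − x₄y₂`. -/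
def sForm {n : ℕ} (x y : V n) : ZMod n :=
  x (Sum.inl 0) * y (Sum.inr 0) + x (Sum.inl 1) * y (Sum.inr 1)
    - x (Sum.inr 0) * y (Sum.inl 0) - x (Sum.inr 1) * y (Sum.inl 1)

/-- An ordered pair `(W₁, W₂)` of subgroups of `V`, each isomorphic to `(ℤ/nℤ)²`, mutually
orthogonal for the symplectic form, which together span `V`. -/
def IsCompPair {n : ℕ} (W₁ W₂ : AddSubgroup (V n)) : Prop :=
  Nonempty (W₁ ≃+ (ZMod n × ZMod n)) ∧ Nonempty (W₂ ≃+ (ZMod n × ZMod n)) ∧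
    (∀ w₁ ∈ W₁, ∀ w₂ ∈ W₂, sForm w₁ w₂ = 0) ∧ W₁ ⊔ W₂ = ⊤

/-- The involution `φ_{W₁,W₂}`, acting as the identity on `W₁` and as `−1` on `W₂`,
belongs to `H`. -/
def InvolutionInH {n : ℕ} (H : Subgroup ↥(Sp4 n)) (W₁ W₂ : AddSubgroup (V n)) : Prop :=
  ∃ g ∈ H,
    (∀ w ∈ W₁, (g : Matrix (Fin 2 ⊕ Fin 2) (Fin 2 ⊕ Fin 2) (ZMod n)).mulVec w = w) ∧
    (∀ w ∈ W₂, (g : Matrix (Fin 2 ⊕ Fin 2) (Fin 2 ⊕ Fin 2) (ZMod n)).mulVec w = -w)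

/-- `[x]_p`: the largest power `p^j ≤ x` (for `p` prime and `x ≥ 1`). -/
noncomputable def bracketP (p : ℕ) (x : ℝ) : ℝ := (p : ℝ) ^ (Nat.log p ⌊x⌋₊)

/-! ### The group generated by root subgroups of a congruence level -/

section Cell

variable {R : Type*} [CommRing R]

/-- The matrix `M` is the underlying matrix of an element of `K`. -/
def InK (K : Subgroup ↥(symplecticGroup (Fin 2) R))
    (M : Matrix (Fin 2 ⊕ Fin 2) (Fin 2 ⊕ Fin 2) R) : Prop :=
  ∃ h ∈ K, (h : Matrix (Fin 2 ⊕ Fin 2) (Fin 2 ⊕ Fin 2) R) = M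

variable {K : Subgroup ↥(symplecticGroup (Fin 2) R)}

lemma InK.mul {M N : Matrix (Fin 2 ⊕ Fin 2) (Fin 2 ⊕ Fin 2) R} (hM : InK K M) (hN : InK K N) :
    InK K (M * N) := by
  obtain ⟨a, ha, rfl⟩ := hM
  obtain ⟨b, hb, rfl⟩ := hN
  exact ⟨a * b, K.mul_mem ha hb, rfl⟩

lemma InK.of_mul_left {M N : Matrix (Fin 2 ⊕ Fin 2) (Fin 2 ⊕ Fin 2) R} (hM : InK K M)
    (hMN : InK K (M * N)) : InK K N := by
  obtain ⟨a, ha, rfl⟩ := hM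
  obtain ⟨b, hb, hab⟩ := hMN
  refine ⟨a⁻¹ * b, K.mul_mem (K.inv_mem ha) hb, ?_⟩
  have h1 : ((a⁻¹ * a : ↥(symplecticGroup (Fin 2) R)) :
      Matrix (Fin 2 ⊕ Fin 2) (Fin 2 ⊕ Fin 2) R) = 1 := by
    rw [inv_mul_cancel]; rfl
  rw [Submonoid.coe_mul] at h1
  rw [Submonoid.coe_mul, hab, ← Matrix.mul_assoc, h1, Matrix.one_mul]

/-- The block-diagonal matrix `diag(A, D)`, symplectic exactly when `Aᵀ * D = 1`. -/
abbrev gMat (A D : Matrix (Fin 2) (Fin 2) R) : Matrix (Fin 2 ⊕ Fin 2) (Fin 2 ⊕ Fin 2) R :=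
  fromBlocks A 0 0 D

/-- The upper unipotent matrix with block `S`, symplectic exactly when `S` is symmetric. -/
abbrev uMat (S : Matrix (Fin 2) (Fin 2) R) : Matrix (Fin 2 ⊕ Fin 2) (Fin 2 ⊕ Fin 2) R :=
  fromBlocks 1 S 0 1

/-- The lower unipotent matrix with block `S`, symplectic exactly when `S` is symmetric. -/
abbrev lMat (S : Matrix (Fin 2) (Fin 2) R) : Matrix (Fin 2 ⊕ Fin 2) (Fin 2 ⊕ Fin 2) R :=
  fromBlocks 1 0 S 1

/-- `K` contains the elements with parameter divisible by `β` of the four short root subgroups. -/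
structure ShortIn (K : Subgroup ↥(symplecticGroup (Fin 2) R)) (β : R) : Prop where
  u : ∀ x, β ∣ x → InK K (uMat !![0, x; x, 0])
  l : ∀ x, β ∣ x → InK K (lMat !![0, x; x, 0])
  e : ∀ x, β ∣ x → InK K (gMat !![1, x; 0, 1] !![1, 0; -x, 1])
  f : ∀ x, β ∣ x → InK K (gMat !![1, 0; x, 1] !![1, -x; 0, 1])

/-- `K` contains the elements with parameter divisible by `π` of all eight root subgroups; the
ones in the two unipotent radicals of the Siegel parabolics are collected into symmetric blocks. -/
structure RootsIn (K : Subgroup ↥(symplecticGroup (Fin 2) R)) (π : R) : Prop where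
  u : ∀ S : Matrix (Fin 2) (Fin 2) R, Sᵀ = S → (∀ i j, π ∣ S i j) → InK K (uMat S)
  l : ∀ S : Matrix (Fin 2) (Fin 2) R, Sᵀ = S → (∀ i j, π ∣ S i j) → InK K (lMat S)
  e : ∀ x, π ∣ x → InK K (gMat !![1, x; 0, 1] !![1, 0; -x, 1])
  f : ∀ x, π ∣ x → InK K (gMat !![1, 0; x, 1] !![1, -x; 0, 1])

/-- Long root elements are commutators of short ones: `[e(x), u(y)]` has parameter `2xy`. -/
lemma ShortIn.rootsIn {β π w : R} (h : ShortIn K β) (hw : π = 2 * β * β * w) : RootsIn K π := by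
  have hβ : β ∣ π := ⟨2 * β * w, by rw [hw]; ring⟩
  have hneg : ∀ x, β ∣ x → β ∣ -x := fun x hx => (dvd_neg).2 hx
  have u1 : ∀ x, π ∣ x → InK K (uMat !![x, 0; 0, 0]) := by
    rintro _ ⟨z, rfl⟩
    have hy : β ∣ β * w * z := ⟨w * z, by ring⟩
    have := (((h.e β dvd_rfl).mul (h.u _ hy)).mul (h.e _ (hneg _ dvd_rfl))).mul
      (h.u _ (hneg _ hy))
    convert this using 1
    simp only [fromBlocks_multiply, fromBlocks_inj, hw]
    refine ⟨?_, ?_, ?_, ?_⟩ <;> ext i j <;> fin_cases i <;> fin_cases j <;>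
      simp <;> ring
  have u2 : ∀ x, π ∣ x → InK K (uMat !![0, 0; 0, x]) := by
    rintro _ ⟨z, rfl⟩
    have hy : β ∣ β * w * z := ⟨w * z, by ring⟩
    have := (((h.f β dvd_rfl).mul (h.u _ hy)).mul (h.f _ (hneg _ dvd_rfl))).mul
      (h.u _ (hneg _ hy))
    convert this using 1
    simp only [fromBlocks_multiply, fromBlocks_inj, hw]
    refine ⟨?_, ?_, ?_, ?_⟩ <;> ext i j <;> fin_cases i <;> fin_cases j <;>
      simp <;> ring
  have l1 : ∀ x, π ∣ x → InK K (lMat !![x, 0; 0, 0]) := by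
    rintro _ ⟨z, rfl⟩
    have hy : β ∣ β * w * z := ⟨w * z, by ring⟩
    have := (((h.f _ (hneg _ dvd_rfl)).mul (h.l _ hy)).mul (h.f β dvd_rfl)).mul
      (h.l _ (hneg _ hy))
    convert this using 1
    simp only [fromBlocks_multiply, fromBlocks_inj, hw]
    refine ⟨?_, ?_, ?_, ?_⟩ <;> ext i j <;> fin_cases i <;> fin_cases j <;>
      simp <;> ring
  have l2 : ∀ x, π ∣ x → InK K (lMat !![0, 0; 0, x]) := by
    rintro _ ⟨z, rfl⟩
    have hy : β ∣ β * w * z := ⟨w * z, by ring⟩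
    have := (((h.e _ (hneg _ dvd_rfl)).mul (h.l _ hy)).mul (h.e β dvd_rfl)).mul
      (h.l _ (hneg _ hy))
    convert this using 1
    simp only [fromBlocks_multiply, fromBlocks_inj, hw]
    refine ⟨?_, ?_, ?_, ?_⟩ <;> ext i j <;> fin_cases i <;> fin_cases j <;>
      simp <;> ring
  refine ⟨fun S hS hd => ?_, fun S hS hd => ?_, fun x hx => h.e x (hβ.trans hx),
    fun x hx => h.f x (hβ.trans hx)⟩
  · have := ((u1 _ (hd 0 0)).mul (h.u _ (hβ.trans (hd 0 1)))).mul (u2 _ (hd 1 1))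
    have hs : S 1 0 = S 0 1 := congr_fun (congr_fun hS 0) 1
    convert this using 1
    simp only [fromBlocks_multiply, fromBlocks_inj]
    refine ⟨?_, ?_, ?_, ?_⟩ <;> ext i j <;> fin_cases i <;> fin_cases j <;>
      simp [hs]
  · have := ((l1 _ (hd 0 0)).mul (h.l _ (hβ.trans (hd 0 1)))).mul (l2 _ (hd 1 1))
    have hs : S 1 0 = S 0 1 := congr_fun (congr_fun hS 0) 1
    convert this using 1
    simp only [fromBlocks_multiply, fromBlocks_inj]
    refine ⟨?_, ?_, ?_, ?_⟩ <;> ext i j <;> fin_cases i <;> fin_cases j <;>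
      simp [hs]

/-- In the long root copies of `SL₂`, elementary matrices of level `π` generate the diagonal
matrices `diag(d, d⁻¹)` with `d ≡ 1 mod π²`. -/
lemma RootsIn.torus {π d e d' e' : R} (h : RootsIn K π) (hd : π * π ∣ d - 1) (he : d * e = 1)
    (hd' : π * π ∣ d' - 1) (he' : d' * e' = 1) :
    InK K (gMat !![d, 0; 0, d'] !![e, 0; 0, e']) := by
  obtain ⟨z, hz⟩ := hd
  obtain ⟨z', hz'⟩ := hd'
  obtain rfl : d = 1 + π * π * z := by rw [← hz]; ring
  obtain rfl : d' = 1 + π * π * z' := by rw [← hz']; ring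
  have hU : ∀ a b, π ∣ a → π ∣ b → InK K (uMat !![a, 0; 0, b]) := fun a b ha hb =>
    h.u _ (by ext i j; fin_cases i <;> fin_cases j <;> simp)
      (by intro i j; fin_cases i <;> fin_cases j <;> simp [ha, hb])
  have hL : ∀ a b, π ∣ a → π ∣ b → InK K (lMat !![a, 0; 0, b]) := fun a b ha hb =>
    h.l _ (by ext i j; fin_cases i <;> fin_cases j <;> simp)
      (by intro i j; fin_cases i <;> fin_cases j <;> simp [ha, hb])
  -- both coordinates are treated at once: `diag(1 + xy) = L(-y/(1+xy)) U(x) L(y) U(-x/(1+xy))`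
  have := (((hL (-(π * z * e)) (-(π * z' * e')) ⟨-(z * e), by ring⟩ ⟨-(z' * e'), by ring⟩).mul
    (hU π π dvd_rfl dvd_rfl)).mul (hL (π * z) (π * z') ⟨z, rfl⟩ ⟨z', rfl⟩)).mul
    (hU (-(π * e)) (-(π * e')) ⟨-e, by ring⟩ ⟨-e', by ring⟩)
  convert this using 1
  simp only [fromBlocks_multiply, fromBlocks_inj]
  refine ⟨?_, ?_, ?_, ?_⟩ <;> ext i j <;> fin_cases i <;> fin_cases j <;>
      simp [Matrix.mul_apply, Fin.sum_univ_two, Matrix.one_apply] <;> grind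

/-- The `LDU` decomposition of the Levi factor `GL₂`. -/
lemma RootsIn.levi {π a b c d a' δ' : R} (h : RootsIn K π) (ha' : a * a' = 1)
    (hδ : (d - c * a' * b) * δ' = 1) (hb : π ∣ b) (hc : π ∣ c) (ha : π * π ∣ a - 1)
    (hd : π * π ∣ d - c * a' * b - 1) {A' : Matrix (Fin 2) (Fin 2) R}
    (hA' : !![a, b; c, d]ᵀ * A' = 1) : InK K (gMat !![a, b; c, d] A') := by
  have := ((h.f (c * a') (hc.mul_right _)).mul (h.torus ha ha' hd hδ)).mul
    (h.e (a' * b) (hb.mul_left _))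
  have hA : !![1, 0; c * a', 1] * !![a, 0; 0, d - c * a' * b] * !![1, a' * b; 0, 1]
      = !![a, b; c, d] := by
    ext i j; fin_cases i <;> fin_cases j <;> simp [Matrix.mul_apply, Fin.sum_univ_two] <;> grind
  have hA2 : !![a, b; c, d]ᵀ *
      (!![1, -(c * a'); 0, 1] * !![a', 0; 0, δ'] * !![1, 0; -(a' * b), 1]) = 1 := by
    ext i j; fin_cases i <;> fin_cases j <;> simp [Matrix.mul_apply, Fin.sum_univ_two] <;> grind
  have h3 : !![1, -(c * a'); 0, 1] * !![a', 0; 0, δ'] * !![1, 0; -(a' * b), 1] = A' := by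
    have h4 := mul_eq_one_comm.1 hA2
    calc _ = (!![1, -(c * a'); 0, 1] * !![a', 0; 0, δ'] * !![1, 0; -(a' * b), 1]) *
          (!![a, b; c, d]ᵀ * A') := by rw [hA', Matrix.mul_one]
      _ = A' := by rw [← Matrix.mul_assoc, h4, Matrix.one_mul]
  convert this using 1
  simp only [fromBlocks_multiply, Matrix.mul_zero, Matrix.zero_mul, add_zero, zero_add, hA, h3]

/-- A symplectic matrix in the big cell whose coordinates have level `π` off the diagonal and
`π²` on it belongs to `K`. -/
lemma RootsIn.cell {π : R} (h : RootsIn K π) {A B C D : Matrix (Fin 2) (Fin 2) R}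
    (hg : fromBlocks A B C D ∈ symplecticGroup (Fin 2) R) {a' δ' : R}
    (ha' : A 0 0 * a' = 1) (hδ : (A 1 1 - A 1 0 * a' * A 0 1) * δ' = 1)
    (hb : π ∣ A 0 1) (hc : π ∣ A 1 0) (ha : π * π ∣ A 0 0 - 1)
    (hd : π * π ∣ A 1 1 - A 1 0 * a' * A 0 1 - 1)
    (hB : ∀ i j, π ∣ B i j) (hC : ∀ i j, π ∣ C i j) : InK K (fromBlocks A B C D) := by
  have hAe : A = !![A 0 0, A 0 1; A 1 0, A 1 1] := Matrix.eta_fin_two A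
  have hdet : A.det * (a' * δ') = 1 := by
    rw [Matrix.det_fin_two]; grind
  have hu : IsUnit A.det := IsUnit.of_mul_eq_one _ hdet
  have h1 : A * A⁻¹ = 1 := Matrix.mul_nonsing_inv A hu
  have h2 : A⁻¹ * A = 1 := Matrix.nonsing_inv_mul A hu
  have h1t : (A⁻¹)ᵀ * Aᵀ = 1 := by rw [← Matrix.transpose_mul, h1, Matrix.transpose_one]
  have h2t : Aᵀ * (A⁻¹)ᵀ = 1 := by rw [← Matrix.transpose_mul, h2, Matrix.transpose_one]
  obtain ⟨g1, -, g3⟩ := SymplecticGroup.fromBlocks_mem_iff.1 hg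
  have hgt := SymplecticGroup.transpose_mem hg
  rw [fromBlocks_transpose] at hgt
  obtain ⟨k1, -, -⟩ := SymplecticGroup.fromBlocks_mem_iff.1 hgt
  simp only [Matrix.transpose_transpose] at k1
  have hS' : (C * A⁻¹)ᵀ = C * A⁻¹ := by
    rw [Matrix.transpose_mul]
    calc (A⁻¹)ᵀ * Cᵀ = (A⁻¹)ᵀ * (Cᵀ * A) * A⁻¹ := by
          rw [Matrix.mul_assoc, Matrix.mul_assoc, h1, Matrix.mul_one]
      _ = ((A⁻¹)ᵀ * Aᵀ) * C * A⁻¹ := by rw [← g1]; simp only [Matrix.mul_assoc]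
      _ = C * A⁻¹ := by rw [h1t, Matrix.one_mul]
  have hS : (A⁻¹ * B)ᵀ = A⁻¹ * B := by
    rw [Matrix.transpose_mul]
    calc Bᵀ * (A⁻¹)ᵀ = A⁻¹ * (A * Bᵀ) * (A⁻¹)ᵀ := by
          rw [← Matrix.mul_assoc A⁻¹, h2, Matrix.one_mul]
      _ = A⁻¹ * B * (Aᵀ * (A⁻¹)ᵀ) := by rw [k1]; simp only [Matrix.mul_assoc]
      _ = A⁻¹ * B := by rw [h2t, Matrix.mul_one]
  have hD : D = C * A⁻¹ * B + (A⁻¹)ᵀ := by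
    calc D = ((A⁻¹)ᵀ * Aᵀ) * D := by rw [h1t, Matrix.one_mul]
      _ = (A⁻¹)ᵀ * (Cᵀ * B + 1) := by rw [← g3, Matrix.mul_assoc]; congr 1; abel
      _ = (C * A⁻¹)ᵀ * B + (A⁻¹)ᵀ := by
        rw [Matrix.mul_add, Matrix.mul_one, Matrix.transpose_mul, Matrix.mul_assoc]
      _ = _ := by rw [hS']
  have hm : InK K (gMat A (A⁻¹)ᵀ) := by
    have := h.levi ha' hδ hb hc ha hd (A' := (A⁻¹)ᵀ) (by rw [← hAe]; exact h2t)
    rwa [← hAe] at this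
  have := ((h.l (C * A⁻¹) hS' (fun i j => by
      rw [Matrix.mul_apply]; exact Finset.dvd_sum fun k _ => (hC i k).mul_right _)).mul hm).mul
    (h.u (A⁻¹ * B) hS (fun i j => by
      rw [Matrix.mul_apply]; exact Finset.dvd_sum fun k _ => (hB k j).mul_left _))
  convert this using 1
  simp only [fromBlocks_multiply, Matrix.mul_zero, Matrix.zero_mul, add_zero, zero_add,
    Matrix.one_mul, Matrix.mul_one, fromBlocks_inj]
  refine ⟨trivial, ?_, ?_, ?_⟩
  · rw [← Matrix.mul_assoc, h1, Matrix.one_mul]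
  · rw [Matrix.mul_assoc, h2, Matrix.mul_one]
  · rw [Matrix.mul_assoc C, h2, Matrix.mul_one, ← Matrix.mul_assoc C, ← hD]

end Cell

section Cell

variable {R : Type*} [CommRing R] {K : Subgroup ↥(symplecticGroup (Fin 2) R)}

/-- The principal congruence subgroup of level `π²` is contained in `K` once `K` contains the root
elements of level `π`, provided `1 + (π)` consists of units. -/
lemma RootsIn.congruence {π : R} (h : RootsIn K π) (hunit : ∀ z, IsUnit (1 + π * z))
    (g : ↥(symplecticGroup (Fin 2) R))
    (hg : ∀ i j, π * π ∣ ((g : Matrix (Fin 2 ⊕ Fin 2) (Fin 2 ⊕ Fin 2) R) - 1) i j) : g ∈ K := by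
  obtain ⟨M, hM⟩ := g
  simp only at hg
  rw [← Matrix.fromBlocks_toBlocks M] at hM
  have hπ : π ∣ π * π := dvd_mul_right _ _
  have hone (x : R) (hx : π * π ∣ x - 1) : ∃ y, x * y = 1 := by
    obtain ⟨z, hz⟩ := hx
    have := hunit (π * z)
    rw [show 1 + π * (π * z) = x by rw [← mul_assoc, ← hz]; ring] at this
    exact this.exists_right_inv
  have ha : π * π ∣ M.toBlocks₁₁ 0 0 - 1 := by simpa [Matrix.toBlocks₁₁] using hg (Sum.inl 0) (Sum.inl 0)
  have hd : π * π ∣ M.toBlocks₁₁ 1 1 - 1 := by simpa [Matrix.toBlocks₁₁] using hg (Sum.inl 1) (Sum.inl 1)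
  have hb : π * π ∣ M.toBlocks₁₁ 0 1 := by simpa [Matrix.toBlocks₁₁] using hg (Sum.inl 0) (Sum.inl 1)
  have hc : π * π ∣ M.toBlocks₁₁ 1 0 := by simpa [Matrix.toBlocks₁₁] using hg (Sum.inl 1) (Sum.inl 0)
  have hB : ∀ i j, π * π ∣ M.toBlocks₁₂ i j := fun i j => by
    simpa [Matrix.toBlocks₁₂] using hg (Sum.inl i) (Sum.inr j)
  have hC : ∀ i j, π * π ∣ M.toBlocks₂₁ i j := fun i j => by
    simpa [Matrix.toBlocks₂₁] using hg (Sum.inr i) (Sum.inl j)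
  obtain ⟨a', ha'⟩ := hone _ ha
  have hd2 : π * π ∣ M.toBlocks₁₁ 1 1 - M.toBlocks₁₁ 1 0 * a' * M.toBlocks₁₁ 0 1 - 1 := by
    have := dvd_sub hd (hb.mul_left (M.toBlocks₁₁ 1 0 * a'))
    convert this using 1
    ring
  obtain ⟨δ', hδ'⟩ := hone _ hd2
  obtain ⟨k, hk, hkM⟩ := h.cell hM ha' hδ' (hπ.trans hb) (hπ.trans hc) ha hd2
    (fun i j => hπ.trans (hB i j)) (fun i j => hπ.trans (hC i j))
  rw [Matrix.fromBlocks_toBlocks] at hkM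
  have : k = ⟨M, Matrix.fromBlocks_toBlocks M ▸ hM⟩ := Subtype.ext hkM
  rwa [← this]

/-- Over a local ring in which `2` is invertible, some symmetric `S` makes `A + S * C` invertible:
one of the `2 × 2` minors of the first two columns is a unit, and each of them contributes to
`det (A + S * C)`. -/
lemma exists_symm_isUnit_det [IsLocalRing R] (h2 : IsUnit (2 : R))
    {A B C D : Matrix (Fin 2) (Fin 2) R}
    (hg : fromBlocks A B C D ∈ symplecticGroup (Fin 2) R) :
    ∃ S : Matrix (Fin 2) (Fin 2) R, Sᵀ = S ∧ IsUnit (A + S * C).det := by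
  obtain ⟨g1, -, g3⟩ := SymplecticGroup.fromBlocks_mem_iff.1 hg
  have e1 : A 0 0 * C 0 1 + A 1 0 * C 1 1 = C 0 0 * A 0 1 + C 1 0 * A 1 1 := by
    simpa [Matrix.mul_apply, Fin.sum_univ_two] using congr_fun (congr_fun g1 0) 1
  have e2 := congr_arg Matrix.det g3
  rw [Matrix.det_one, Matrix.det_fin_two] at e2
  simp only [Matrix.sub_apply, Matrix.mul_apply, Fin.sum_univ_two, Matrix.transpose_apply] at e2
  have key : ∀ s q r : R, (A + !![s, q; q, r] * C).det =
      (A 0 0 * A 1 1 - A 0 1 * A 1 0) + s * (C 0 0 * A 1 1 - C 0 1 * A 1 0)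
      + r * (A 0 0 * C 1 1 - A 0 1 * C 1 0) + (s * r - q * q) * (C 0 0 * C 1 1 - C 0 1 * C 1 0)
      + q * 2 * (A 0 0 * C 0 1 - A 0 1 * C 0 0) := by
    intro s q r
    rw [Matrix.det_fin_two]
    simp only [Matrix.add_apply, Matrix.mul_apply, Fin.sum_univ_two, Matrix.of_apply,
      Matrix.cons_val', Matrix.cons_val_zero, Matrix.cons_val_one, Matrix.cons_val_fin_one]
    linear_combination (-q) * e1
  have symm : ∀ s q r : R, !![s, q; q, r]ᵀ = !![s, q; q, r] := by
    intro s q r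
    ext i j
    fin_cases i <;> fin_cases j <;> rfl
  set m1 := A 0 0 * A 1 1 - A 0 1 * A 1 0 with hm1
  set m2 := C 0 0 * A 1 1 - C 0 1 * A 1 0 with hm2
  set m3 := A 0 0 * C 1 1 - A 0 1 * C 1 0 with hm3
  set m4 := C 0 0 * C 1 1 - C 0 1 * C 1 0 with hm4
  set m5 := A 0 0 * C 0 1 - A 0 1 * C 0 0 with hm5
  have hsum : ∀ a b : R, ¬ IsUnit a → IsUnit b → IsUnit (a + b) := by
    intro a b ha hb
    by_contra hc
    have hneg : ¬ IsUnit (-a) := by rwa [IsUnit.neg_iff]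
    have := IsLocalRing.nonunits_add (a := a + b) (b := -a) hc hneg
    rw [add_neg_cancel_comm] at this
    exact this hb
  have hadd : ∀ a b : R, ¬ IsUnit a → ¬ IsUnit b → ¬ IsUnit (a + b) := fun a b ha hb =>
    IsLocalRing.nonunits_add ha hb
  have hmul : ∀ a b : R, ¬ IsUnit a → ¬ IsUnit (b * a) := fun a b ha hab =>
    ha (isUnit_of_mul_isUnit_right hab)
  by_cases h1 : IsUnit m1
  · exact ⟨_, symm 0 0 0, by rw [key]; simpa using h1⟩
  by_cases h2' : IsUnit m2
  · refine ⟨_, symm 1 0 0, ?_⟩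
    rw [key]; simpa using hsum _ _ h1 h2'
  by_cases h3 : IsUnit m3
  · refine ⟨_, symm 0 0 1, ?_⟩
    rw [key]; simpa using hsum _ _ h1 h3
  by_cases h4 : IsUnit m4
  · refine ⟨_, symm 1 0 1, ?_⟩
    rw [key]; simpa using hsum _ _ (hadd _ _ (hadd _ _ h1 h2') h3) h4
  by_cases h5 : IsUnit m5
  · refine ⟨_, symm 0 1 0, ?_⟩
    rw [key]
    have := hsum _ _ (hadd _ _ h1 (hmul _ (-1) h4)) (h2.mul h5)
    simpa using this
  -- Cauchy–Binet: `1 = det (Aᵀ D - Cᵀ B)` is a combination of the five minors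
  exfalso
  have : (1 : R) = (D 0 0 * D 1 1 - D 0 1 * D 1 0) * m1 + (B 0 1 * D 1 0 - B 0 0 * D 1 1) * m2
      + (B 1 1 * D 0 0 - B 1 0 * D 0 1) * (-1) * m3 + (B 0 0 * B 1 1 - B 0 1 * B 1 0) * m4
      + (B 0 0 * D 0 1 - B 0 1 * D 0 0 + B 1 1 * D 1 0 - B 1 0 * D 1 1) * m5 := by
    linear_combination (B 1 0 * D 1 1 - B 1 1 * D 1 0) * e1 - e2
  refine (hadd _ _ (hadd _ _ (hadd _ _ (hadd _ _ (hmul _ _ h1) (hmul _ _ h2')) (hmul _ _ h3))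
    (hmul _ _ h4)) (hmul _ _ h5)) (this ▸ isUnit_one)

/-- Over a local ring in which `2` is invertible, the root subgroups generate `Sp₄`. -/
lemma RootsIn.eq_top [IsLocalRing R] (h2 : IsUnit (2 : R)) (h : RootsIn K 1) : K = ⊤ := by
  refine eq_top_iff.2 fun g _ => ?_
  obtain ⟨M, hM⟩ := g
  suffices hs : InK K M by
    obtain ⟨k, hk, hkM⟩ := hs
    have : k = ⟨M, hM⟩ := Subtype.ext hkM
    rwa [← this]
  -- matrices whose two leading principal minors are units lie in the big cell
  have case1 : ∀ A B C D : Matrix (Fin 2) (Fin 2) R,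
      fromBlocks A B C D ∈ symplecticGroup (Fin 2) R → IsUnit A.det → IsUnit (A 0 0) →
      InK K (fromBlocks A B C D) := by
    intro A B C D hg hdet ha
    obtain ⟨a', ha'⟩ := ha.exists_right_inv
    obtain ⟨e, he⟩ := hdet.exists_right_inv
    rw [Matrix.det_fin_two] at he
    exact h.cell hg ha' (δ' := A 0 0 * e) (by grind) (one_dvd _) (one_dvd _) (by simp) (by simp)
      (fun _ _ => one_dvd _) (fun _ _ => one_dvd _)
  -- if only `det A` is a unit, left translation by the root element `e(1)` makes `A 0 0` a unit
  have case2 : ∀ A B C D : Matrix (Fin 2) (Fin 2) R,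
      fromBlocks A B C D ∈ symplecticGroup (Fin 2) R → IsUnit A.det →
      InK K (fromBlocks A B C D) := by
    intro A B C D hg hdet
    by_cases ha : IsUnit (A 0 0)
    · exact case1 A B C D hg hdet ha
    have he := h.e 1 dvd_rfl
    refine InK.of_mul_left he ?_
    have hmem : gMat !![1, 1; 0, 1] !![1, 0; -1, 1] ∈ symplecticGroup (Fin 2) R := by
      obtain ⟨k, -, hk⟩ := he
      rw [← hk]; exact k.2
    have hmem2 := (symplecticGroup (Fin 2) R).mul_mem hmem hg
    rw [fromBlocks_multiply] at hmem2 ⊢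
    refine case1 _ _ _ _ hmem2 ?_ ?_
    · rw [Matrix.zero_mul, add_zero, Matrix.det_mul]
      simpa using hdet
    · have hc : IsUnit (A 1 0) := by
        by_contra hc
        rw [Matrix.det_fin_two] at hdet
        have e1 : ¬ IsUnit (A 0 0 * A 1 1) := fun hh => ha (isUnit_of_mul_isUnit_left hh)
        have e2 : ¬ IsUnit (-(A 0 1 * A 1 0)) := fun hh =>
          hc (isUnit_of_mul_isUnit_right ((IsUnit.neg_iff _).1 hh))
        rw [sub_eq_add_neg] at hdet
        exact IsLocalRing.nonunits_add e1 e2 hdet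
      have : ((!![1, 1; 0, 1] : Matrix (Fin 2) (Fin 2) R) * A +
          (0 : Matrix (Fin 2) (Fin 2) R) * C) 0 0
          = A 0 0 + A 1 0 := by
        rw [Matrix.zero_mul, add_zero, Matrix.mul_apply, Fin.sum_univ_two]; simp
      rw [this]
      by_contra hs
      have e2 : ¬ IsUnit (-(A 0 0)) := by rwa [IsUnit.neg_iff]
      have := IsLocalRing.nonunits_add hs e2
      rw [add_neg_cancel_comm] at this
      exact this hc
  rw [← Matrix.fromBlocks_toBlocks M] at hM ⊢
  obtain ⟨S, hS, hu⟩ := exists_symm_isUnit_det h2 hM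
  have hin := h.u S hS (fun _ _ => one_dvd _)
  refine InK.of_mul_left hin ?_
  have hmem : uMat S ∈ symplecticGroup (Fin 2) R := by
    obtain ⟨k, -, hk⟩ := hin
    rw [← hk]; exact k.2
  have hmem2 := (symplecticGroup (Fin 2) R).mul_mem hmem hM
  rw [fromBlocks_multiply] at hmem2 ⊢
  exact case2 _ _ _ _ hmem2 (by rwa [Matrix.one_mul])

end Cell

/-! ### Averaging over frames -/

/-- If `T` has density at least `ε` in `G`, some `g ∈ T` has, along each of four one-parameter
subgroups, a proportion at least `ε / 4` of its right translates in `T`. Indeed the elements of `T`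
on cosets where `T` has density less than `ε / 4` make up a proportion less than `ε / 4` of `G`. -/
lemma exists_good_frame {G : Type*} [Group G] [Fintype G] [DecidableEq G] {n : ℕ} [NeZero n]
    (T : Finset G) (u : Fin 4 → ZMod n → G) (hu : ∀ i x y, u i (x + y) = u i x * u i y)
    (ε : ℝ) (hε : 0 < ε) (hT : ε * Fintype.card G ≤ T.card) :
    ∃ g ∈ T, ∀ i, ε / 4 * n ≤ (Finset.univ.filter fun y => g * u i y ∈ T).card := by
  by_contra! hcon
  set bad : Fin 4 → Finset G := fun i =>
    T.filter fun g => ((Finset.univ.filter fun y => g * u i y ∈ T).card : ℝ) < ε / 4 * n with hbad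
  have hn : (0 : ℝ) < n := by exact_mod_cast Nat.pos_of_ne_zero (NeZero.ne n)
  have hcover : T ⊆ Finset.univ.biUnion bad := by
    intro g hg
    obtain ⟨i, hi⟩ := hcon g hg
    simp only [Finset.mem_biUnion, Finset.mem_univ, true_and]
    exact ⟨i, by simp [hbad, hg, hi]⟩
  have hsmall : ∀ i, ((bad i).card : ℝ) < ε / 4 * Fintype.card G := by
    intro i
    have hdc : (n : ℝ) * (bad i).card =
        ∑ g : G, ((Finset.univ.filter fun y => g * u i y ∈ bad i).card : ℝ) := by
      have h1 : ∀ y : ZMod n, ∑ g : G, (if g * u i y ∈ bad i then (1 : ℝ) else 0)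
          = (bad i).card := by
        intro y
        have := Fintype.sum_equiv (Equiv.mulRight (u i y))
          (fun g => if g * u i y ∈ bad i then (1 : ℝ) else 0)
          (fun g => if g ∈ bad i then (1 : ℝ) else 0) (fun g => rfl)
        rw [this]
        simp
      calc (n : ℝ) * (bad i).card = ∑ y : ZMod n, ((bad i).card : ℝ) := by
            simp [ZMod.card]
        _ = ∑ y : ZMod n, ∑ g : G, (if g * u i y ∈ bad i then (1 : ℝ) else 0) := by
            simp_rw [h1]
        _ = _ := by
            rw [Finset.sum_comm]
            simp
    have hlt : ∀ g : G,
        ((Finset.univ.filter fun y => g * u i y ∈ bad i).card : ℝ) < ε / 4 * n := by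
      intro g
      rcases (Finset.univ.filter fun y => g * u i y ∈ bad i).eq_empty_or_nonempty with h0 | ⟨y₀, hy₀⟩
      · rw [h0]; simp only [Finset.card_empty, Nat.cast_zero]; positivity
      · have hy₀' : g * u i y₀ ∈ bad i := by simpa using hy₀
        have hb := (Finset.mem_filter.1 hy₀').2
        refine lt_of_le_of_lt ?_ hb
        have : (Finset.univ.filter fun y => g * u i y ∈ bad i).card ≤
            (Finset.univ.filter fun y => g * u i y₀ * u i y ∈ T).card := by
          refine Finset.card_le_card_of_injOn (fun y => y - y₀) ?_ ?_
          · intro y hy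
            have hy' : g * u i y ∈ bad i := by simpa using hy
            have : g * u i y₀ * u i (y - y₀) = g * u i y := by
              rw [mul_assoc, ← hu, add_sub_cancel]
            simpa [this] using (Finset.mem_filter.1 hy').1
          · intro y _ z _ h
            simpa using h
        exact_mod_cast this
    have hsum : ∑ g : G, ((Finset.univ.filter fun y => g * u i y ∈ bad i).card : ℝ)
        < ∑ _g : G, ε / 4 * n :=
      Finset.sum_lt_sum_of_nonempty Finset.univ_nonempty fun g _ => hlt g
    rw [← hdc, Finset.sum_const, Finset.card_univ, nsmul_eq_mul] at hsum
    have : (n : ℝ) * (bad i).card < n * (ε / 4 * Fintype.card G) := by linarith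
    exact lt_of_mul_lt_mul_left this hn.le
  have h1 : (T.card : ℝ) ≤ ∑ i, ((bad i).card : ℝ) := by
    exact_mod_cast (Finset.card_le_card hcover).trans Finset.card_biUnion_le
  rw [Fin.sum_univ_four] at h1
  have := hsmall 0
  have := hsmall 1
  have := hsmall 2
  have := hsmall 3
  linarith

/-- If `φ` inverts the one-parameter subgroups `u i` and at least a proportion `ε` of the conjugates
of `φ` lie in `H`, then after one conjugation `H` contains a proportion at least `ε / 4` of the
elements `u i (2 * y)` for every `i`. The point is that `u(y) φ u(y)⁻¹ = φ u(-2y)`. -/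
lemma exists_conj_of_inverts {G : Type*} [Group G] [Finite G] {n : ℕ} [NeZero n]
    (H : Subgroup G) (φ : G) (u : Fin 4 → ZMod n → G)
    (hu : ∀ i x y, u i (x + y) = u i x * u i y) (huφ : ∀ i x, u i x * φ = φ * u i (-x))
    (ε : ℝ) (hε : 0 < ε) (hT : ε * Nat.card G ≤ Nat.card {g : G // g * φ * g⁻¹ ∈ H}) :
    ∃ g : G, ∀ i, ε / 4 * n ≤ Nat.card {y : ZMod n // g * u i (2 * y) * g⁻¹ ∈ H} := by
  classical
  have : Fintype G := Fintype.ofFinite _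
  have hu0 : ∀ i, u i 0 = 1 := fun i => by
    have := hu i 0 0
    rw [add_zero] at this
    simpa using this
  have hneg : ∀ i x, u i (-x) = (u i x)⁻¹ := fun i x => by
    rw [eq_inv_iff_mul_eq_one, ← hu, neg_add_cancel, hu0]
  rw [Nat.card_eq_fintype_card, Nat.card_eq_fintype_card, Fintype.card_subtype] at hT
  obtain ⟨g, hg, h⟩ := exists_good_frame _ u hu ε hε hT
  refine ⟨g, fun i => (h i).trans ?_⟩
  have hg' : g * φ * g⁻¹ ∈ H := by simpa using hg
  rw [Nat.cast_le, Nat.card_eq_fintype_card, Fintype.card_subtype]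
  refine Finset.card_le_card fun y hy => ?_
  simp only [Finset.mem_filter, Finset.mem_univ, true_and] at hy ⊢
  have h1 : (g * φ * g⁻¹)⁻¹ * (g * u i y * φ * (g * u i y)⁻¹) = (g * u i (2 * y) * g⁻¹)⁻¹ := by
    rw [mul_assoc g (u i y) φ, huφ, hneg, two_mul, hu]
    group
  have h2 := H.mul_mem (H.inv_mem hg') hy
  rw [h1] at h2
  simpa using H.inv_mem h2

/-! ### Short root subgroups and the standard involution -/

section Short

variable {R : Type*} [CommRing R]

/-- The matrices of the four short root subgroups. -/
def shortMat (i : Fin 4) (x : R) : Matrix (Fin 2 ⊕ Fin 2) (Fin 2 ⊕ Fin 2) R :=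
  match i with
  | 0 => uMat !![0, x; x, 0]
  | 1 => lMat !![0, x; x, 0]
  | 2 => gMat !![1, x; 0, 1] !![1, 0; -x, 1]
  | 3 => gMat !![1, 0; x, 1] !![1, -x; 0, 1]

lemma shortMat_mem (i : Fin 4) (x : R) : shortMat i x ∈ symplecticGroup (Fin 2) R := by
  fin_cases i <;> simp only [shortMat] <;> rw [SymplecticGroup.fromBlocks_mem_iff] <;>
    refine ⟨?_, ?_, ?_⟩ <;> ext i j <;> fin_cases i <;> fin_cases j <;>
    simp [Matrix.mul_apply, Fin.sum_univ_two]

lemma shortMat_add (i : Fin 4) (x y : R) :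
    shortMat i (x + y) = shortMat i x * shortMat i y := by
  fin_cases i <;> simp only [shortMat] <;> rw [fromBlocks_multiply, fromBlocks_inj] <;>
    refine ⟨?_, ?_, ?_, ?_⟩ <;> ext i j <;> fin_cases i <;> fin_cases j <;> simp [add_comm]

/-- The short root subgroups as maps into the symplectic group. -/
def shortRoot (i : Fin 4) (x : R) : ↥(symplecticGroup (Fin 2) R) :=
  ⟨shortMat i x, shortMat_mem i x⟩

lemma shortRoot_add (i : Fin 4) (x y : R) :
    shortRoot i (x + y) = shortRoot i x * shortRoot i y :=
  Subtype.ext (shortMat_add i x y)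

lemma shortRoot_zero (i : Fin 4) : shortRoot i (0 : R) = 1 := by
  have := shortRoot_add i (0 : R) 0
  rw [add_zero] at this
  simpa using this

lemma shortRoot_neg (i : Fin 4) (x : R) : shortRoot i (-x) = (shortRoot i x)⁻¹ := by
  rw [eq_inv_iff_mul_eq_one, ← shortRoot_add, neg_add_cancel, shortRoot_zero]

/-- The involution attached to the standard decomposition: `+1` on `e₁, f₁`, `-1` on `e₂, f₂`. -/
def phi0 : ↥(symplecticGroup (Fin 2) R) :=
  ⟨gMat !![1, 0; 0, -1] !![1, 0; 0, -1], by
    rw [SymplecticGroup.fromBlocks_mem_iff]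
    refine ⟨?_, ?_, ?_⟩ <;> ext i j <;> fin_cases i <;> fin_cases j <;>
      simp [Matrix.mul_apply, Fin.sum_univ_two]⟩

/-- The standard involution inverts the short root subgroups. -/
lemma shortRoot_mul_phi0 (i : Fin 4) (x : R) :
    shortRoot i x * phi0 = phi0 * shortRoot i (-x) := by
  apply Subtype.ext
  change shortMat i x * gMat !![1, 0; 0, -1] !![1, 0; 0, -1]
    = gMat !![1, 0; 0, -1] !![1, 0; 0, -1] * shortMat i (-x)
  fin_cases i <;> simp only [shortMat] <;> rw [fromBlocks_multiply, fromBlocks_multiply,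
      fromBlocks_inj] <;>
    refine ⟨?_, ?_, ?_, ?_⟩ <;> ext i j <;> fin_cases i <;> fin_cases j <;> simp

lemma ShortIn.of_shortRoot {K : Subgroup ↥(symplecticGroup (Fin 2) R)} {β : R}
    (h : ∀ i x, β ∣ x → shortRoot i x ∈ K) : ShortIn K β :=
  ⟨fun x hx => ⟨_, h 0 x hx, rfl⟩, fun x hx => ⟨_, h 1 x hx, rfl⟩,
    fun x hx => ⟨_, h 2 x hx, rfl⟩, fun x hx => ⟨_, h 3 x hx, rfl⟩⟩

/-- The parameters `y` with `shortRoot i (2 * y) ∈ K`. -/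
def evenParams (K : Subgroup ↥(symplecticGroup (Fin 2) R)) (i : Fin 4) : AddSubgroup R where
  carrier := {y | shortRoot i (2 * y) ∈ K}
  zero_mem' := by
    change shortRoot i (2 * 0) ∈ K
    rw [mul_zero, shortRoot_zero]; exact K.one_mem
  add_mem' {a b} ha hb := by
    change shortRoot i (2 * (a + b)) ∈ K
    rw [mul_add, shortRoot_add]; exact K.mul_mem ha hb
  neg_mem' {a} ha := by
    change shortRoot i (2 * -a) ∈ K
    rw [mul_neg, shortRoot_neg]; exact K.inv_mem ha

end Short

/-- If the conjugates of `phi0` lying in `H` are at least a proportion `ε`, then in some frame `H`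
contains a proportion at least `ε / 4` of the even part of each short root subgroup. -/
lemma exists_conj_evenParams {n : ℕ} [NeZero n] (H : Subgroup ↥(Sp4 n)) (ε : ℝ) (hε : 0 < ε)
    (hT : ε * Nat.card ↥(Sp4 n) ≤ Nat.card {g : ↥(Sp4 n) // g * phi0 * g⁻¹ ∈ H}) :
    ∃ g : ↥(Sp4 n), ∀ i, ε / 4 * n ≤
      Nat.card (evenParams (H.comap (MulAut.conj g).toMonoidHom) i) :=
  exists_conj_of_inverts H phi0 shortRoot shortRoot_add shortRoot_mul_phi0 ε hε hT

/-! ### From short root elements to an index bound -/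

lemma isLocalRing_zmod_prime_pow {p t : ℕ} (hp : p.Prime) (ht : 1 ≤ t) :
    IsLocalRing (ZMod (p ^ t)) := by
  have := Fact.mk hp
  have : Fact (1 < p ^ t) := ⟨Nat.one_lt_pow (by omega) hp.one_lt⟩
  exact IsLocalRing.of_surjective' (PadicInt.toZModPow (p := p) t)
    (ZMod.ringHom_surjective _)

lemma isUnit_two_zmod_prime_pow {p t : ℕ} (hp : p.Prime) (h2 : p ≠ 2) :
    IsUnit (2 : ZMod (p ^ t)) := by
  have := (ZMod.isUnit_iff_coprime 2 (p ^ t)).2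
    (Nat.Coprime.pow_right _ ((Nat.coprime_primes Nat.prime_two hp).2 h2.symm))
  simpa using this

/-- A subgroup of `ℤ/p^tℤ` of density at least `δ` contains `(p^a)` for some `p^a ≤ δ⁻¹`. -/
lemma exists_pow_mem_of_card {p t : ℕ} (hp : p.Prime) (Y : AddSubgroup (ZMod (p ^ t)))
    (δ : ℝ) (hδ : 0 < δ) (hY : δ * (p ^ t : ℕ) ≤ Nat.card Y) :
    ∃ a : ℕ, (p : ℝ) ^ a ≤ δ⁻¹ ∧ ∀ z, (p : ZMod (p ^ t)) ^ a * z ∈ Y := by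
  have hmul : Nat.card Y * Y.index = p ^ t := by
    rw [AddSubgroup.card_mul_index, Nat.card_zmod]
  obtain ⟨a, -, ha⟩ := (Nat.dvd_prime_pow hp).1 (Dvd.intro_left _ hmul)
  refine ⟨a, ?_, fun z => ?_⟩
  · have hpos : (0 : ℝ) < (p ^ t : ℕ) := by exact_mod_cast pow_pos hp.pos t
    have h1 : (Nat.card Y : ℝ) * (p : ℝ) ^ a = (p ^ t : ℕ) := by
      have := congrArg (Nat.cast : ℕ → ℝ) (ha ▸ hmul)
      push_cast at this ⊢
      exact this
    have hpa : (0 : ℝ) < (p : ℝ) ^ a := pow_pos (by exact_mod_cast hp.pos) a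
    rw [← one_div, le_div_iff₀ hδ]
    have h2 : δ * (p ^ t : ℕ) * (p : ℝ) ^ a ≤ (p ^ t : ℕ) :=
      (mul_le_mul_of_nonneg_right hY hpa.le).trans_eq h1
    by_contra! hc
    nlinarith
  · have := Y.nsmul_index_mem z
    rw [ha, nsmul_eq_mul] at this
    simpa using this

/-- Density of the even parameters yields all root elements of level `p^c`; the factor `2` of the
even parameters and that of the commutator formula only matter for `p = 2`. -/
lemma exists_rootsIn {p t : ℕ} (hp : p.Prime) (K : Subgroup ↥(Sp4 (p ^ t))) (ε : ℝ)
    (hε : 0 < ε) (hK : ∀ i, ε / 4 * (p ^ t : ℕ) ≤ Nat.card (evenParams K i)) :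
    ∃ c : ℕ, (p : ℝ) ^ c ≤ 128 * ε⁻¹ ^ 2 ∧ RootsIn K ((p : ZMod (p ^ t)) ^ c) ∧
      (c = 0 → p ≠ 2) := by
  choose a ha1 ha2 using fun i => exists_pow_mem_of_card hp (evenParams K i) (ε / 4)
    (by positivity) (hK i)
  obtain ⟨i₀, -, hmax⟩ := Finset.exists_max_image Finset.univ a ⟨0, Finset.mem_univ 0⟩
  have hmem : ∀ i z, shortRoot i (2 * ((p : ZMod (p ^ t)) ^ a i₀ * z)) ∈ K := by
    intro i z
    have h1 := ha2 i ((p : ZMod (p ^ t)) ^ (a i₀ - a i) * z)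
    rw [← mul_assoc, ← pow_add, Nat.add_sub_cancel' (hmax i (Finset.mem_univ i))] at h1
    exact h1
  have hb := ha1 i₀
  have hinv : (ε / 4)⁻¹ = 4 * ε⁻¹ := by rw [inv_div]; ring
  rw [hinv] at hb
  have hpos : (0 : ℝ) ≤ (p : ℝ) ^ a i₀ := by positivity
  have hsq : ((p : ℝ) ^ a i₀) ^ 2 ≤ (4 * ε⁻¹) ^ 2 := pow_le_pow_left₀ hpos hb 2
  have hε2 : (0 : ℝ) ≤ ε⁻¹ ^ 2 := by positivity
  by_cases h2 : p = 2
  · subst h2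
    refine ⟨2 * a i₀ + 3, ?_, ?_, by omega⟩
    · rw [pow_add, mul_comm 2, pow_mul]
      push_cast at hsq ⊢
      nlinarith
    · have hs : ShortIn K (((2 : ℕ) : ZMod (2 ^ t)) ^ (a i₀ + 1)) := by
        refine ShortIn.of_shortRoot fun i x hx => ?_
        obtain ⟨z, rfl⟩ := hx
        have := hmem i z
        convert this using 2
        push_cast
        ring
      refine hs.rootsIn (w := 1) ?_
      push_cast
      ring
  · obtain ⟨v, hv⟩ := (isUnit_two_zmod_prime_pow (t := t) hp h2).exists_right_inv
    refine ⟨2 * a i₀, ?_, ?_, fun _ => h2⟩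
    · rw [mul_comm 2, pow_mul]
      nlinarith
    · have hs : ShortIn K ((p : ZMod (p ^ t)) ^ a i₀) := by
        refine ShortIn.of_shortRoot fun i x hx => ?_
        obtain ⟨z, rfl⟩ := hx
        have := hmem i (v * z)
        convert this using 2
        linear_combination (-(p : ZMod (p ^ t)) ^ a i₀ * z) * hv
      refine hs.rootsIn (w := v) ?_
      linear_combination (-(p : ZMod (p ^ t)) ^ (2 * a i₀)) * hv

/-- A subgroup containing all matrices congruent to `1` modulo `M` has index at most `M ^ 16`, the
number of `4 × 4` matrices modulo `M`. -/
lemma index_le_of_congruence {n M : ℕ} [NeZero n] [NeZero M] (K : Subgroup ↥(Sp4 n))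
    (hK : ∀ g : ↥(Sp4 n), (∀ i j, (M : ZMod n) ∣
      ((g : Matrix (Fin 2 ⊕ Fin 2) (Fin 2 ⊕ Fin 2) (ZMod n)) - 1) i j) → g ∈ K) :
    K.index ≤ M ^ 16 := by
  let F : ↥(Sp4 n) → (Fin 2 ⊕ Fin 2) → (Fin 2 ⊕ Fin 2) → ZMod M := fun g i j =>
    (((g : Matrix (Fin 2 ⊕ Fin 2) (Fin 2 ⊕ Fin 2) (ZMod n)) i j).val : ZMod M)
  have hF : ∀ g g', F g = F g' → g⁻¹ * g' ∈ K := by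
    intro g g' h
    refine hK _ fun i j => ?_
    have hdiff : ∀ k, (M : ZMod n) ∣ ((g' : Matrix (Fin 2 ⊕ Fin 2) (Fin 2 ⊕ Fin 2) (ZMod n)) -
        (g : Matrix (Fin 2 ⊕ Fin 2) (Fin 2 ⊕ Fin 2) (ZMod n))) k j := by
      intro k
      have h1 := congr_fun (congr_fun h k) j
      simp only [F] at h1
      rw [ZMod.natCast_eq_natCast_iff] at h1
      obtain ⟨z, hz⟩ := Nat.modEq_iff_dvd.1 h1
      refine ⟨(z : ZMod n), ?_⟩
      have := congr_arg (Int.cast : ℤ → ZMod n) hz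
      push_cast at this
      simpa [ZMod.natCast_zmod_val] using this
    have h1 : ((g⁻¹ * g' : ↥(Sp4 n)) : Matrix (Fin 2 ⊕ Fin 2) (Fin 2 ⊕ Fin 2) (ZMod n)) - 1 =
        ((g⁻¹ : ↥(Sp4 n)) : Matrix (Fin 2 ⊕ Fin 2) (Fin 2 ⊕ Fin 2) (ZMod n)) *
        ((g' : Matrix (Fin 2 ⊕ Fin 2) (Fin 2 ⊕ Fin 2) (ZMod n)) - g) := by
      have h2 : ((g⁻¹ * g : ↥(Sp4 n)) : Matrix (Fin 2 ⊕ Fin 2) (Fin 2 ⊕ Fin 2) (ZMod n)) = 1 := by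
        rw [inv_mul_cancel]; rfl
      rw [Submonoid.coe_mul] at h2 ⊢
      rw [Matrix.mul_sub, h2]
    rw [h1, Matrix.mul_apply]
    exact Finset.dvd_sum fun k _ => (hdiff k).mul_left _
  have hinj : Function.Injective fun q : ↥(Sp4 n) ⧸ K => F q.out := by
    intro q q' h
    have := hF _ _ h
    rw [← QuotientGroup.eq, QuotientGroup.out_eq', QuotientGroup.out_eq'] at this
    exact this
  have := Nat.card_le_card_of_injective _ hinj
  rw [Subgroup.index]
  refine this.trans_eq ?_
  simp only [Nat.card_pi, Nat.card_zmod, Finset.prod_const, Finset.card_univ, Fintype.card_sum,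
    Fintype.card_fin]
  rw [← pow_mul]

/-- For `c ≥ 1` the index is at most `(p^(2c))^16`, and the extra factor `p` is absorbed by `p ≤ p^c`;
for `c = 0` the prime is odd and `K` is everything. -/
lemma index_bound {p t : ℕ} (hp : p.Prime) (ht : 1 ≤ t) (K : Subgroup ↥(Sp4 (p ^ t))) (ε : ℝ)
    (hε : 0 < ε) (hK : ∀ i, ε / 4 * (p ^ t : ℕ) ≤ Nat.card (evenParams K i)) :
    K.index = 1 ∨ (p : ℝ) * K.index ≤ (128 * ε⁻¹ ^ 2) ^ 33 := by
  obtain ⟨c, hc1, hc2, hc3⟩ := exists_rootsIn hp K ε hε hK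
  have : NeZero (p ^ t) := ⟨(pow_pos hp.pos t).ne'⟩
  rcases Nat.eq_zero_or_pos c with h0 | hpos
  · left
    have := isLocalRing_zmod_prime_pow hp ht
    rw [h0, pow_zero] at hc2
    rw [hc2.eq_top (isUnit_two_zmod_prime_pow hp (hc3 h0)), Subgroup.index_top]
  · right
    have : NeZero (p ^ (2 * c)) := ⟨(pow_pos hp.pos _).ne'⟩
    have hnil : ∀ z, IsUnit (1 + (p : ZMod (p ^ t)) ^ c * z) := by
      intro z
      have : IsNilpotent ((p : ZMod (p ^ t)) ^ c * z) := by
        refine ⟨t, ?_⟩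
        have h : (p : ZMod (p ^ t)) ^ t = 0 := by
          rw [← Nat.cast_pow]
          exact ZMod.natCast_self (p ^ t)
        rw [mul_pow, ← pow_mul, mul_comm c, pow_mul, h, zero_pow hpos.ne', zero_mul]
      exact this.isUnit_one_add
    have hidx : K.index ≤ (p ^ (2 * c)) ^ 16 := by
      refine index_le_of_congruence K fun g hg => hc2.congruence hnil g fun i j => ?_
      have := hg i j
      rw [Nat.cast_pow, two_mul, pow_add] at this
      exact this
    have hidx' : (K.index : ℝ) ≤ ((p : ℝ) ^ c) ^ 32 := by
      calc (K.index : ℝ) ≤ (((p ^ (2 * c)) ^ 16 : ℕ) : ℝ) := by exact_mod_cast hidx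
        _ = _ := by push_cast; rw [← pow_mul, ← pow_mul]; congr 1; ring
    have hp1 : (1 : ℝ) ≤ p := by exact_mod_cast hp.one_lt.le
    have hpc : (p : ℝ) ≤ (p : ℝ) ^ c := le_self_pow₀ hp1 hpos.ne'
    calc (p : ℝ) * K.index ≤ (p : ℝ) ^ c * ((p : ℝ) ^ c) ^ 32 := by gcongr
      _ = ((p : ℝ) ^ c) ^ 33 := by ring
      _ ≤ _ := by gcongr

/-! ### Transitivity on complementary pairs and counting -/

/-- Counting along a map `π : G → X` whose fibres are permuted by left multiplication: all the
fibres over its image `P` have the same size as the fibre of `1`. -/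
lemma card_preimage {G X : Type*} [Group G] (π : G → X) (P : X → Prop)
    (hP : ∀ x, P x ↔ ∃ g, π g = x)
    (hπ : ∀ g h h', π h = π h' → π (g * h) = π (g * h')) (Q : X → Prop) :
    Nat.card {g // Q (π g)} = Nat.card {x // P x ∧ Q x} * Nat.card {g // π g = π 1} := by
  choose s hs using fun x : {x // P x} => (hP x).1 x.2
  rw [← Nat.card_prod]
  have hs1 : ∀ x (k : G), π k = π 1 → π (s x * k) = x := fun x k hk => by
    rw [hπ (s x) k 1 hk, mul_one, hs]
  refine Nat.card_congr
    { toFun := fun g => (⟨π g, (hP _).2 ⟨g, rfl⟩, g.2⟩,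
        ⟨(s ⟨π g, (hP _).2 ⟨g, rfl⟩⟩)⁻¹ * g, ?_⟩)
      invFun := fun y => ⟨s ⟨y.1, y.1.2.1⟩ * y.2, ?_⟩
      left_inv := ?_
      right_inv := ?_ }
  · rw [hπ _ g.1 (s ⟨π g, (hP _).2 ⟨g, rfl⟩⟩) (hs ⟨π g, (hP _).2 ⟨g, rfl⟩⟩).symm, inv_mul_cancel]
  · rw [hs1 _ _ y.2.2]
    exact y.1.2.2
  · intro g
    simp
  · rintro ⟨⟨x, hx, hq⟩, ⟨k, hk⟩⟩
    have h := hs1 ⟨x, hx⟩ k hk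
    simp [h]

section Transitive

variable {n : ℕ}

lemma sForm_eq (x y : V n) : sForm x y = -(x ⬝ᵥ (J (Fin 2) (ZMod n)) *ᵥ y) := by
  simp [sForm, J, dotProduct, mulVec, Matrix.one_apply, Fintype.sum_sum_type, Fin.sum_univ_two]
  ring

lemma sForm_mulVec (g : ↥(Sp4 n)) (x y : V n) :
    sForm (g.1 *ᵥ x) (g.1 *ᵥ y) = sForm x y := by
  rw [sForm_eq, sForm_eq, mulVec_mulVec, dotProduct_comm, dotProduct_mulVec,
    ← mulVec_transpose, mulVec_mulVec, ← Matrix.mul_assoc, SymplecticGroup.mem_iff'.1 g.2,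
    dotProduct_comm]

/-- The entries of the Gram matrix of the columns of `P`. -/
lemma gram_apply (P : Matrix (Fin 2 ⊕ Fin 2) (Fin 2 ⊕ Fin 2) (ZMod n)) (i j) :
    (Pᵀ * J (Fin 2) (ZMod n) * P) i j = -sForm (fun k => P k i) (fun k => P k j) := by
  rw [sForm_eq, neg_neg, Matrix.mul_assoc, Matrix.mul_apply]
  rfl

/-- The image of a subgroup of `V` under a symplectic matrix. -/
def act (g : ↥(Sp4 n)) (W : AddSubgroup (V n)) : AddSubgroup (V n) :=
  W.map g.1.mulVecLin.toAddMonoidHom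

lemma mem_act {g : ↥(Sp4 n)} {W : AddSubgroup (V n)} {v : V n} :
    v ∈ act g W ↔ ∃ w ∈ W, g.1 *ᵥ w = v := Iff.rfl

lemma act_mul (g h : ↥(Sp4 n)) (W : AddSubgroup (V n)) : act (g * h) W = act g (act h W) := by
  ext v
  simp only [mem_act]
  constructor
  · rintro ⟨w, hw, rfl⟩
    exact ⟨_, ⟨w, hw, rfl⟩, by rw [mulVec_mulVec]; rfl⟩
  · rintro ⟨_, ⟨w, hw, rfl⟩, rfl⟩
    exact ⟨w, hw, by rw [mulVec_mulVec]; rfl⟩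

lemma act_one (W : AddSubgroup (V n)) : act 1 W = W := by
  ext v
  simp [mem_act]

lemma mulVec_injective_sp (g : ↥(Sp4 n)) : Function.Injective (g.1 *ᵥ ·) := by
  intro x y h
  have := congrArg (g⁻¹.1 *ᵥ ·) h
  have h1 : g⁻¹.1 * g.1 = 1 := congrArg Subtype.val (inv_mul_cancel g)
  simpa [mulVec_mulVec, h1] using this

lemma IsCompPair.act {W₁ W₂ : AddSubgroup (V n)} (h : IsCompPair W₁ W₂) (g : ↥(Sp4 n)) :
    IsCompPair (act g W₁) (act g W₂) := by
  obtain ⟨⟨e₁⟩, ⟨e₂⟩, h3, h4⟩ := h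
  have hinj : Function.Injective g.1.mulVecLin.toAddMonoidHom := mulVec_injective_sp g
  refine ⟨⟨(W₁.equivMapOfInjective _ hinj).symm.trans e₁⟩,
    ⟨(W₂.equivMapOfInjective _ hinj).symm.trans e₂⟩, ?_, ?_⟩
  · rintro _ ⟨x, hx, rfl⟩ _ ⟨y, hy, rfl⟩
    exact (sForm_mulVec g x y).trans (h3 x hx y hy)
  · rw [_root_.act, _root_.act, ← AddSubgroup.map_sup, h4, eq_top_iff]
    intro v _
    refine ⟨g⁻¹.1 *ᵥ v, trivial, ?_⟩
    have h1 : g.1 * g⁻¹.1 = 1 := congrArg Subtype.val (mul_inv_cancel g)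
    change g.1 *ᵥ (g⁻¹.1 *ᵥ v) = v
    rw [mulVec_mulVec, h1, one_mulVec]

/-- The standard plane spanned by the basis vectors indexed by `inl i` and `inr i`. -/
def stdPlane (n : ℕ) (i : Fin 2) : AddSubgroup (V n) where
  carrier := {v | v (Sum.inl (1 - i)) = 0 ∧ v (Sum.inr (1 - i)) = 0}
  zero_mem' := ⟨rfl, rfl⟩
  add_mem' := fun ha hb => ⟨by simp [ha.1, hb.1], by simp [ha.2, hb.2]⟩
  neg_mem' := fun ha => ⟨by simp [ha.1], by simp [ha.2]⟩

lemma mem_stdPlane_zero {v : V n} :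
    v ∈ stdPlane n 0 ↔ v (Sum.inl 1) = 0 ∧ v (Sum.inr 1) = 0 := Iff.rfl

lemma mem_stdPlane_one {v : V n} :
    v ∈ stdPlane n 1 ↔ v (Sum.inl 0) = 0 ∧ v (Sum.inr 0) = 0 := Iff.rfl

/-- Coordinates on a standard plane. -/
def stdPlaneEquiv (n : ℕ) (i : Fin 2) : stdPlane n i ≃+ (ZMod n × ZMod n) where
  toFun := fun v => (v.1 (Sum.inl i), v.1 (Sum.inr i))
  invFun := fun x => ⟨Sum.elim (fun j => if j = i then x.1 else 0)
    (fun j => if j = i then x.2 else 0), by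
      fin_cases i
      · exact ⟨by simp, by simp⟩
      · exact ⟨by simp, by simp⟩⟩
  left_inv := by
    rintro ⟨v, h1, h2⟩
    ext j
    fin_cases i <;> rcases j with j | j <;> fin_cases j <;>
      first | rfl | exact h1.symm | exact h2.symm
  right_inv := fun x => by simp
  map_add' := fun _ _ => rfl

lemma isCompPair_std (n : ℕ) : IsCompPair (stdPlane n 0) (stdPlane n 1) := by
  refine ⟨⟨stdPlaneEquiv n 0⟩, ⟨stdPlaneEquiv n 1⟩, ?_, ?_⟩
  · intro v hv w hw
    rw [mem_stdPlane_zero] at hv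
    rw [mem_stdPlane_one] at hw
    simp [sForm, hv.1, hv.2, hw.1, hw.2]
  · rw [eq_top_iff]
    intro v _
    rw [AddSubgroup.mem_sup]
    refine ⟨Sum.elim ![v (Sum.inl 0), 0] ![v (Sum.inr 0), 0], ⟨rfl, rfl⟩,
      Sum.elim ![0, v (Sum.inl 1)] ![0, v (Sum.inr 1)], ⟨rfl, rfl⟩, ?_⟩
    ext j
    rcases j with j | j <;> fin_cases j <;> simp

lemma exists_span_of_equiv {W : AddSubgroup (V n)} (e : W ≃+ (ZMod n × ZMod n)) :
    ∃ u₁ ∈ W, ∃ u₂ ∈ W, ∀ w ∈ W, ∃ a b : ZMod n, w = a • u₁ + b • u₂ := by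
  set f : ZMod n × ZMod n →+ V n := W.subtype.comp e.symm.toAddMonoidHom with hf
  have hfm : ∀ x, f x ∈ W := fun x => (e.symm x).2
  refine ⟨f (1, 0), hfm _, f (0, 1), hfm _, fun w hw => ⟨(e ⟨w, hw⟩).1, (e ⟨w, hw⟩).2, ?_⟩⟩
  rw [← ZMod.map_smul, ← ZMod.map_smul, ← map_add]
  have : (e ⟨w, hw⟩).1 • ((1 : ZMod n), (0 : ZMod n)) + (e ⟨w, hw⟩).2 • ((0 : ZMod n), (1 : ZMod n))
      = e ⟨w, hw⟩ := by ext <;> simp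
  rw [this]
  simp [hf]

/-- The matrix with the given four columns. -/
def colMat (u₁ u₂ w₁ w₂ : V n) : Matrix (Fin 2 ⊕ Fin 2) (Fin 2 ⊕ Fin 2) (ZMod n) :=
  Matrix.of fun i j => (Sum.elim ![u₁, w₁] ![u₂, w₂] j) i

lemma colMat_mulVec (u₁ u₂ w₁ w₂ v : V n) :
    colMat u₁ u₂ w₁ w₂ *ᵥ v = (v (Sum.inl 0) • u₁ + v (Sum.inr 0) • u₂)
      + (v (Sum.inl 1) • w₁ + v (Sum.inr 1) • w₂) := by
  ext i
  simp [colMat, mulVec, dotProduct, Fintype.sum_sum_type, Fin.sum_univ_two]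
  ring

lemma sForm_swap (x y : V n) : sForm x y = -sForm y x := by
  simp only [sForm]; ring

lemma sForm_self (x : V n) : sForm x x = 0 := by
  simp only [sForm]; ring

lemma sForm_smul_right (a : ZMod n) (x y : V n) : sForm x (a • y) = a * sForm x y := by
  simp only [sForm, Pi.smul_apply, smul_eq_mul]; ring

/-- For orthogonal planes spanning `V`, the form restricted to each plane is unimodular. -/
lemma exists_scale (u₁ u₂ w₁ w₂ : V n) (h11 : sForm u₁ w₁ = 0) (h12 : sForm u₁ w₂ = 0)
    (h21 : sForm u₂ w₁ = 0)
    (hsurj : Function.Surjective (colMat u₁ u₂ w₁ w₂).mulVec) :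
    ∃ a b : ZMod n, a * sForm u₁ u₂ = 1 ∧ b * sForm w₁ w₂ = 1 := by
  set P := colMat u₁ u₂ w₁ w₂ with hP
  obtain ⟨Q, hQ⟩ := Matrix.mulVec_surjective_iff_exists_right_inverse.1 hsurj
  have hQ' : Q * P = 1 := mul_eq_one_comm.1 hQ
  have hJ : J (Fin 2) (ZMod n) * -J (Fin 2) (ZMod n) = 1 := by
    rw [Matrix.mul_neg, J_squared, neg_neg]
  -- the Gram matrix of the columns of `P` is invertible
  have hX : (Pᵀ * J (Fin 2) (ZMod n) * P) * (Q * -J (Fin 2) (ZMod n) * Qᵀ) = 1 := by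
    calc _ = Pᵀ * (J (Fin 2) (ZMod n) * (P * Q) * -J (Fin 2) (ZMod n)) * Qᵀ := by
          simp only [Matrix.mul_assoc]
      _ = 1 := by rw [hQ, Matrix.mul_one, hJ, Matrix.mul_one, ← transpose_mul, hQ', transpose_one]
  generalize Q * -J (Fin 2) (ZMod n) * Qᵀ = X at hX
  have e0 := congrFun (congrFun hX (Sum.inl 0)) (Sum.inl 0)
  have e1 := congrFun (congrFun hX (Sum.inl 1)) (Sum.inl 1)
  rw [Matrix.mul_apply, Fintype.sum_sum_type, Fin.sum_univ_two, Fin.sum_univ_two] at e0 e1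
  simp only [gram_apply] at e0 e1
  have c0 : (fun k => P k (Sum.inl 0)) = u₁ := rfl
  have c1 : (fun k => P k (Sum.inl 1)) = w₁ := rfl
  have c2 : (fun k => P k (Sum.inr 0)) = u₂ := rfl
  have c3 : (fun k => P k (Sum.inr 1)) = w₂ := rfl
  rw [c0, c1, c2, c3, sForm_self, h11, h12] at e0
  rw [c0, c1, c2, c3, sForm_self, sForm_swap w₁ u₁, sForm_swap w₁ u₂, h11, h21] at e1
  simp only [Matrix.one_apply_eq] at e0 e1
  exact ⟨-X (Sum.inr 0) (Sum.inl 0), -X (Sum.inr 1) (Sum.inl 1),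
    by linear_combination e0, by linear_combination e1⟩

lemma colMat_mem (u₁ u₂ w₁ w₂ : V n) (h11 : sForm u₁ w₁ = 0) (h12 : sForm u₁ w₂ = 0)
    (h21 : sForm u₂ w₁ = 0) (h22 : sForm u₂ w₂ = 0) (hu : sForm u₁ u₂ = 1)
    (hw : sForm w₁ w₂ = 1) : colMat u₁ u₂ w₁ w₂ ∈ Sp4 n := by
  rw [SymplecticGroup.mem_iff']
  ext i j
  rw [gram_apply]
  have hc : ∀ j, (fun k => colMat u₁ u₂ w₁ w₂ k j) = Sum.elim ![u₁, w₁] ![u₂, w₂] j := fun _ => rfl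
  rw [hc, hc]
  rcases i with i | i <;> rcases j with j | j <;> fin_cases i <;> fin_cases j <;>
    simp [J, sForm_self, h11, h12, h21, h22, hu, hw, sForm_swap w₁ u₁, sForm_swap w₁ u₂,
      sForm_swap w₂ u₁, sForm_swap w₂ u₂, sForm_swap u₂ u₁, sForm_swap w₂ w₁]

/-- Witt's theorem for the pairs at hand: `Sp(4)` acts transitively on complementary pairs. -/
lemma IsCompPair.exists_act {W₁ W₂ : AddSubgroup (V n)} (h : IsCompPair W₁ W₂) :
    ∃ g : ↥(Sp4 n), _root_.act g (stdPlane n 0) = W₁ ∧ _root_.act g (stdPlane n 1) = W₂ := by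
  obtain ⟨⟨e₁⟩, ⟨e₂⟩, h3, h4⟩ := h
  obtain ⟨u₁, hu₁, u₂, hu₂, hu⟩ := exists_span_of_equiv e₁
  obtain ⟨w₁, hw₁, w₂, hw₂, hw⟩ := exists_span_of_equiv e₂
  have hsurj : Function.Surjective (colMat u₁ u₂ w₁ w₂).mulVec := by
    intro v
    have hv : v ∈ W₁ ⊔ W₂ := h4 ▸ AddSubgroup.mem_top v
    obtain ⟨x, hx, y, hy, rfl⟩ := AddSubgroup.mem_sup.1 hv
    obtain ⟨a, b, rfl⟩ := hu x hx
    obtain ⟨c, d, rfl⟩ := hw y hy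
    exact ⟨Sum.elim ![a, c] ![b, d], by rw [colMat_mulVec]; simp⟩
  obtain ⟨a, b, ha, hb⟩ := exists_scale u₁ u₂ w₁ w₂ (h3 _ hu₁ _ hw₁) (h3 _ hu₁ _ hw₂)
    (h3 _ hu₂ _ hw₁) hsurj
  have hau : a • u₂ ∈ W₁ := ZMod.smul_mem hu₂ a
  have hbw : b • w₂ ∈ W₂ := ZMod.smul_mem hw₂ b
  refine ⟨⟨colMat u₁ (a • u₂) w₁ (b • w₂), colMat_mem _ _ _ _ (h3 _ hu₁ _ hw₁) (h3 _ hu₁ _ hbw)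
    (h3 _ hau _ hw₁) (h3 _ hau _ hbw) (by rw [sForm_smul_right, ha])
    (by rw [sForm_smul_right, hb])⟩, ?_, ?_⟩
  · ext v
    simp only [mem_act, mem_stdPlane_zero, colMat_mulVec]
    constructor
    · rintro ⟨x, ⟨h1, h2⟩, rfl⟩
      rw [h1, h2, zero_smul, zero_smul, add_zero, add_zero]
      exact W₁.add_mem (ZMod.smul_mem hu₁ _) (ZMod.smul_mem hau _)
    · intro hv
      obtain ⟨c, d, rfl⟩ := hu v hv
      refine ⟨Sum.elim ![c, 0] ![d * sForm u₁ u₂, 0], ⟨rfl, rfl⟩, ?_⟩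
      have : d * sForm u₁ u₂ * a = d := by linear_combination d * ha
      simp [smul_smul, this]
  · ext v
    simp only [mem_act, mem_stdPlane_one, colMat_mulVec]
    constructor
    · rintro ⟨x, ⟨h1, h2⟩, rfl⟩
      rw [h1, h2, zero_smul, zero_smul, add_zero, zero_add]
      exact W₂.add_mem (ZMod.smul_mem hw₁ _) (ZMod.smul_mem hbw _)
    · intro hv
      obtain ⟨c, d, rfl⟩ := hw v hv
      refine ⟨Sum.elim ![0, c] ![0, d * sForm w₁ w₂], ⟨rfl, rfl⟩, ?_⟩
      have : d * sForm w₁ w₂ * b = d := by linear_combination d * hb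
      simp [smul_smul, this]

lemma phi0_mulVec_zero {v : V n} (hv : v ∈ stdPlane n 0) :
    (phi0 : ↥(Sp4 n)).1 *ᵥ v = v := by
  rw [mem_stdPlane_zero] at hv
  ext j
  rcases j with j | j <;> fin_cases j <;>
    simp [phi0, mulVec, dotProduct, Fintype.sum_sum_type, Fin.sum_univ_two, hv.1, hv.2]

lemma phi0_mulVec_one {v : V n} (hv : v ∈ stdPlane n 1) :
    (phi0 : ↥(Sp4 n)).1 *ᵥ v = -v := by
  rw [mem_stdPlane_one] at hv
  ext j
  rcases j with j | j <;> fin_cases j <;>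
    simp [phi0, mulVec, dotProduct, Fintype.sum_sum_type, Fin.sum_univ_two, hv.1, hv.2]

/-- The involution of the pair `g • (std planes)` is `g * phi0 * g⁻¹`. -/
lemma conj_phi0_mem {H : Subgroup ↥(Sp4 n)} {g : ↥(Sp4 n)}
    (h : InvolutionInH H (act g (stdPlane n 0)) (act g (stdPlane n 1))) :
    g * phi0 * g⁻¹ ∈ H := by
  obtain ⟨k, hk, h1, h2⟩ := h
  suffices k * g = g * phi0 by rwa [← this, mul_inv_cancel_right]
  apply Subtype.ext
  apply Matrix.mulVec_injective
  funext v
  have hv : v ∈ stdPlane n 0 ⊔ stdPlane n 1 := (isCompPair_std n).2.2.2 ▸ AddSubgroup.mem_top v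
  obtain ⟨x, hx, y, hy, rfl⟩ := AddSubgroup.mem_sup.1 hv
  rw [Submonoid.coe_mul, Submonoid.coe_mul, ← mulVec_mulVec, ← mulVec_mulVec, mulVec_add,
    mulVec_add, mulVec_add, phi0_mulVec_zero hx, phi0_mulVec_one hy,
    h1 _ (mem_act.2 ⟨x, hx, rfl⟩), h2 _ (mem_act.2 ⟨y, hy, rfl⟩), mulVec_add, mulVec_neg]

/-- Each complementary pair is `g` applied to the standard one for equally many `g`, so a density
of pairs is a density of group elements. -/
lemma density_of_count [NeZero n] (H : Subgroup ↥(Sp4 n)) (ε : ℝ)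
    (hcount : ε * (Nat.card {W : AddSubgroup (V n) × AddSubgroup (V n) // IsCompPair W.1 W.2}) ≤
      (Nat.card {W : AddSubgroup (V n) × AddSubgroup (V n) //
        IsCompPair W.1 W.2 ∧ InvolutionInH H W.1 W.2})) :
    ε * Nat.card ↥(Sp4 n) ≤ Nat.card {g : ↥(Sp4 n) // g * phi0 * g⁻¹ ∈ H} := by
  set π : ↥(Sp4 n) → AddSubgroup (V n) × AddSubgroup (V n) :=
    fun g => (act g (stdPlane n 0), act g (stdPlane n 1)) with hπdef
  have hP : ∀ W : AddSubgroup (V n) × AddSubgroup (V n), IsCompPair W.1 W.2 ↔ ∃ g, π g = W := by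
    intro W
    constructor
    · intro hW
      obtain ⟨g, h1, h2⟩ := hW.exists_act
      exact ⟨g, Prod.ext h1 h2⟩
    · rintro ⟨g, rfl⟩
      exact (isCompPair_std n).act g
  have hπ : ∀ g h h', π h = π h' → π (g * h) = π (g * h') := by
    intro g h h' hh
    rw [Prod.ext_iff] at hh ⊢
    simp only [hπdef] at hh ⊢
    rw [act_mul, act_mul, act_mul, act_mul, hh.1, hh.2]
    exact ⟨rfl, rfl⟩
  have hall := card_preimage π (fun W => IsCompPair W.1 W.2) hP hπ (fun _ => True)
  have hH := card_preimage π (fun W => IsCompPair W.1 W.2) hP hπ (fun W => InvolutionInH H W.1 W.2)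
  simp only [and_true] at hall
  have hall' : Nat.card {_g : ↥(Sp4 n) // True} = Nat.card ↥(Sp4 n) :=
    Nat.card_congr (Equiv.subtypeUnivEquiv fun _ => trivial)
  rw [hall'] at hall
  have hle : Nat.card {g // InvolutionInH H (π g).1 (π g).2} ≤
      Nat.card {g : ↥(Sp4 n) // g * phi0 * g⁻¹ ∈ H} :=
    Nat.card_le_card_of_injective (fun g => ⟨g.1, conj_phi0_mem g.2⟩)
      fun a b hab => Subtype.ext (congrArg (fun z => z.1) hab)
  calc ε * Nat.card ↥(Sp4 n)
      = ε * Nat.card {W : AddSubgroup (V n) × AddSubgroup (V n) // IsCompPair W.1 W.2}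
        * Nat.card {g // π g = π 1} := by rw [hall]; push_cast; ring
    _ ≤ Nat.card {W : AddSubgroup (V n) × AddSubgroup (V n) //
        IsCompPair W.1 W.2 ∧ InvolutionInH H W.1 W.2} * Nat.card {g // π g = π 1} := by gcongr
    _ = Nat.card {g // InvolutionInH H (π g).1 (π g).2} := by rw [hH]; push_cast; ring
    _ ≤ _ := by exact_mod_cast hle

end Transitive

/-! ### Numerical conclusion -/

/-- The numerical end: `[x]_p > x / p` turns a bound on `p * N` into one by `[x]_p`. -/
lemma lt_bracket {p N : ℕ} {ε : ℝ} (hp : p.Prime) (hε : 0 < ε) (hε1 : ε ≤ 1)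
    (h : N = 1 ∨ (p : ℝ) * N ≤ (128 * ε⁻¹ ^ 2) ^ 33) :
    (N : ℝ) < 2 ^ 7 * ε⁻¹ ^ 2 * bracketP p (2 ^ 246 * ε⁻¹ ^ 130) := by
  have hi : 1 ≤ ε⁻¹ := (one_le_inv₀ hε).2 hε1
  have hp1 : (1 : ℝ) ≤ p := by exact_mod_cast hp.one_lt.le
  have hp0 : (0 : ℝ) < p := by linarith
  generalize ε⁻¹ = y at *
  have hy2 : 1 ≤ y ^ 2 := one_le_pow₀ hi
  have hy2' : 0 < y ^ 2 := by linarith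
  rcases h with rfl | h
  · have hb : 1 ≤ bracketP p (2 ^ 246 * y ^ 130) := one_le_pow₀ hp1
    have : (1 : ℝ) ≤ y ^ 2 * bracketP p (2 ^ 246 * y ^ 130) := one_le_mul_of_one_le_of_one_le hy2 hb
    push_cast
    linarith
  · have hlt : 2 ^ 246 * y ^ 130 < p * bracketP p (2 ^ 246 * y ^ 130) := by
      have h1 := Nat.lt_pow_succ_log_self hp.one_lt ⌊2 ^ 246 * y ^ 130⌋₊
      have h2 := Nat.lt_of_floor_lt h1
      rw [bracketP, ← pow_succ']
      exact_mod_cast h2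
    have hy66 : y ^ 66 ≤ y ^ 132 := pow_le_pow_right₀ hi (by norm_num)
    have hy132 : 0 < y ^ 132 := by positivity
    have hA : (128 * y ^ 2) ^ 33 = 2 ^ 231 * y ^ 66 := by ring
    have hB : (2 : ℝ) ^ 7 * y ^ 2 * (2 ^ 246 * y ^ 130) = 2 ^ 253 * y ^ 132 := by ring
    refine lt_of_mul_lt_mul_left ?_ hp0.le
    calc (p : ℝ) * N ≤ 2 ^ 231 * y ^ 66 := hA ▸ h
      _ ≤ 2 ^ 231 * y ^ 132 := by gcongr
      _ < 2 ^ 253 * y ^ 132 := by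
        refine mul_lt_mul_of_pos_right ?_ hy132
        norm_num
      _ = 2 ^ 7 * y ^ 2 * (2 ^ 246 * y ^ 130) := hB.symm
      _ < 2 ^ 7 * y ^ 2 * (p * bracketP p (2 ^ 246 * y ^ 130)) := by gcongr
      _ = _ := by ring

theorem statement1 (p t : ℕ) (hp : p.Prime) (ht : 1 ≤ t) (n : ℕ) (hn : n = p ^ t)
    (H : Subgroup ↥(Sp4 n))
    (hneg : ∃ h ∈ H, (h : Matrix (Fin 2 ⊕ Fin 2) (Fin 2 ⊕ Fin 2) (ZMod n)) = -1)
    (ε : ℝ) (hε : 0 < ε)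
    (hcount : ε * (Nat.card {W : AddSubgroup (V n) × AddSubgroup (V n) // IsCompPair W.1 W.2}) ≤
      (Nat.card {W : AddSubgroup (V n) × AddSubgroup (V n) //
        IsCompPair W.1 W.2 ∧ InvolutionInH H W.1 W.2})) :
    (H.index : ℝ) < 2 ^ 7 * ε⁻¹ ^ 2 * bracketP p (2 ^ 246 * ε⁻¹ ^ 130) := by
  subst hn
  have : NeZero (p ^ t) := ⟨(pow_pos hp.pos t).ne'⟩
  have hT := density_of_count H ε hcount
  have hε1 : ε ≤ 1 := by
    have hle : (Nat.card {g : ↥(Sp4 (p ^ t)) // g * phi0 * g⁻¹ ∈ H} : ℝ) ≤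
        Nat.card ↥(Sp4 (p ^ t)) := by
      exact_mod_cast Nat.card_le_card_of_injective Subtype.val Subtype.val_injective
    have hpos : (0 : ℝ) < Nat.card ↥(Sp4 (p ^ t)) := by exact_mod_cast Nat.card_pos
    by_contra! hc
    nlinarith [hT.trans hle]
  obtain ⟨g, hg⟩ := exists_conj_evenParams H ε hε hT
  have hb := index_bound hp ht _ ε hε hg
  rw [Subgroup.index_comap_of_surjective _ (MulAut.conj g).surjective] at hb
  exact lt_bracket hp hε hε1 hb
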